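/- arXiv:hep-th/9405116 — 2 statements merged into one kernel-verified Lean document; each statement's English description precedes it below -/
import Mathlib

section
/- Let g(t) be irrational (not the Laurent expansion at ∞ of a rational function). Then for every matrix A ∈ p_{g(t)}^{-1}(f) (a loop matrix of the form f + upper triangular part), there exists a unique pair (X, B) with X in the nilpotent group N(z) and B a Frobenius matrix (first row arbitrary, subdiagonal 1's, zeros elsewhere), such that -zX' + XA = BX. -/
noncomputable section

/-- An element of `ℂ[t] ⊗ ℂ((z))`, modeled as a `ℤ`-indexed family of polynomials in `t`
(the coefficient of `zᵏ`); membership in Laurent series is the predicate `lsBdd`. -/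
abbrev LS := ℤ → Polynomial ℂ

/-- Support bounded below: a genuine Laurent series in `z`. -/
def lsBdd (h : LS) : Prop := ∃ N : ℤ, ∀ k : ℤ, k < N → h k = 0

/-- The constant `1`. -/
def lsOne : LS := fun k => if k = 0 then 1 else 0

/-- Cauchy product of Laurent series. -/
def lsMul (a b : LS) : LS := fun n => ∑ᶠ k : ℤ, a k * b (n - k)

/-- Entrywise derivative `d/dz`. -/
def lsDer (a : LS) : LS := fun n => (n + 1) • a (n + 1)

/-- Multiplication by `z`. -/
def zShift (a : LS) : LS := fun n => a (n - 1)

/-- Product of (infinite) matrices with entries in `ℂ[t]⊗ℂ((z))`. -/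
def matMul (A B : ℕ → ℕ → LS) : ℕ → ℕ → LS := fun i j => ∑ᶠ k : ℕ, lsMul (A i k) (B k j)

/-- The algebra `gl`: Laurent entries, band condition `a_{ij} = 0` for `i > j + N`, and,
outside finitely many exceptional rows: each diagonal `i ↦ a_{i,i±n}` is polynomial in `i`,
and the integrality condition (iii): for every positive integer `l`, `a_{ij}(l) = 0`
whenever `i < l ≤ j`. -/
def GLmat (A : ℕ → ℕ → LS) : Prop :=
  (∀ i j, lsBdd (A i j)) ∧
  (∃ N : ℕ, ∀ i j : ℕ, j + N < i → A i j = 0) ∧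
  ∃ Rows : Finset ℕ,
    (∀ n : ℕ, ∃ m : ℕ, ∃ c : ℕ → LS, ∀ i : ℕ, i ∉ Rows →
      A i (i + n) = fun z => ∑ k ∈ Finset.range m, ((i : ℂ) ^ k) • c k z) ∧
    (∀ n : ℕ, ∃ m : ℕ, ∃ c : ℕ → LS, ∀ i : ℕ, i ∉ Rows →
      A (i + n) i = fun z => ∑ k ∈ Finset.range m, ((i : ℂ) ^ k) • c k z) ∧
    (∀ i : ℕ, i ∉ Rows → ∀ l : ℕ, 0 < l → ∀ j : ℕ, i < l → l ≤ j →
      ∀ z : ℤ, (A i j z).eval (l : ℂ) = 0)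

/-- `g(t) ∈ t⁻¹ℂ[[t⁻¹]]`, `g = Σ_{n≥0} g_n t^{-1-n}`, is the expansion at `∞` of a rational
function iff its coefficients eventually satisfy a linear recurrence. -/
def RationalTail (g : ℕ → ℂ) : Prop :=
  ∃ q : Polynomial ℂ, q ≠ 0 ∧ ∃ N : ℕ, ∀ n ≥ N,
    ∑ k ∈ Finset.range (q.natDegree + 1), q.coeff k * g (n + k) = 0

/-- The lower shift matrix `f`. -/
def fSh : ℕ → ℕ → LS := fun i j => if i = j + 1 then lsOne else 0

/-- Frobenius matrix: arbitrary Laurent first row, `1`'s on the subdiagonal, `0` elsewhere. -/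
def IsFrob (B : ℕ → ℕ → LS) : Prop :=
  (∀ j, lsBdd (B 0 j)) ∧ (∀ j, B (j + 1) j = lsOne) ∧
  (∀ i j, 0 < i → i ≠ j + 1 → B i j = 0)

/-- Element of the group `N(z)`: identity plus strictly upper triangular, lying in `gl`. -/
def IsUnipUT (X : ℕ → ℕ → LS) : Prop :=
  (∀ i, X i i = lsOne) ∧ (∀ i j, j < i → X i j = 0) ∧ GLmat X

/-! ### Laurent series as Hahn series -/

/-- The ring of Laurent series over `ℂ[t]`. -/
abbrev LH := HahnSeries ℤ (Polynomial ℂ)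

lemma exists_LH {a : LS} (h : lsBdd a) : ∃ x : LH, x.coeff = a := by
  obtain ⟨N, hN⟩ := h
  refine ⟨HahnSeries.ofSuppBddBelow a ⟨N, fun k hk => ?_⟩, HahnSeries.coeff_ofSuppBddBelow⟩
  by_contra hlt
  exact hk (hN k (not_le.mp hlt))

lemma lsBdd_coeff (x : LH) : lsBdd x.coeff :=
  ⟨x.order, fun _ hk => HahnSeries.coeff_eq_zero_of_lt_order hk⟩

lemma lsMul_coeff (x y : LH) : lsMul x.coeff y.coeff = (x * y).coeff := by
  funext n
  rw [HahnSeries.coeff_mul]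
  unfold lsMul
  classical
  rw [finsum_eq_sum_of_support_subset (s := (Finset.antidiagonal x.isPWO_support y.isPWO_support n).image Prod.fst)]
  · rw [Finset.sum_image]
    · apply Finset.sum_congr rfl
      intro p hp
      simp only [Finset.mem_antidiagonal] at hp
      have : n - p.1 = p.2 := by omega
      rw [this]
    · intro p hp q hq hpq
      simp only [Finset.mem_coe, Finset.mem_antidiagonal] at hp hq
      ext
      · exact hpq
      · omega
  · intro k hk
    simp only [Function.mem_support] at hk
    simp only [Finset.coe_image, Set.mem_image]
    refine ⟨(k, n - k), ?_, rfl⟩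
    simp only [Finset.mem_coe, Finset.mem_antidiagonal, HahnSeries.mem_support]
    exact ⟨left_ne_zero_of_mul hk, right_ne_zero_of_mul hk, by omega⟩

lemma lsOne_eq : lsOne = (1 : LH).coeff := by
  funext k
  simp [lsOne, HahnSeries.coeff_one]

lemma lsMul_zero_right (a : LS) : lsMul a 0 = 0 := by
  funext n; simp [lsMul]

lemma lsMul_zero_left (a : LS) : lsMul 0 a = 0 := by
  funext n; simp [lsMul]

lemma lsMul_one_left (a : LS) : lsMul lsOne a = a := by
  funext n
  unfold lsMul
  rw [finsum_eq_single _ 0]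
  · simp [lsOne]
  · intro k hk
    simp [lsOne, hk]

lemma lsMul_one_right (a : LS) : lsMul a lsOne = a := by
  funext n
  unfold lsMul
  rw [finsum_eq_single _ n]
  · simp [lsOne]
  · intro k hk
    have : n - k ≠ 0 := by omega
    simp [lsOne, this]

/-- Euler operator `z d/dz`. -/
def euler : LH →+ LH where
  toFun x := ⟨fun n => n • x.coeff n, x.isPWO_support.mono (by
    intro n hn
    simp only [Function.mem_support] at hn
    rw [HahnSeries.mem_support]
    exact fun h => hn (by rw [h, smul_zero]))⟩
  map_zero' := by ext; simp
  map_add' x y := by ext n; simp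

lemma euler_coeff (x : LH) (n : ℤ) : (euler x).coeff n = n • x.coeff n := rfl

lemma zShift_lsDer (x : LS) (n : ℤ) : zShift (lsDer x) n = n • x n := by
  simp [zShift, lsDer]

/-! ### Vanishing at `t = l` -/

/-- The element `t - l`. -/
def tm (l : ℕ) : LH := HahnSeries.C (Polynomial.X - Polynomial.C (l : ℂ))

lemma dvd_iff (l : ℕ) (x : LH) :
    tm l ∣ x ↔ ∀ z, (x.coeff z).eval (l : ℂ) = 0 := by
  constructor
  · rintro ⟨y, rfl⟩ z
    rw [tm, HahnSeries.C_mul_eq_smul]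
    simp
  · intro h
    refine ⟨⟨fun z => x.coeff z /ₘ (Polynomial.X - Polynomial.C (l : ℂ)),
      x.isPWO_support.mono ?_⟩, ?_⟩
    · intro n hn
      rw [HahnSeries.mem_support]
      intro h0
      apply hn
      simp [h0]
    · ext1
      funext z
      rw [tm, HahnSeries.C_mul_eq_smul, HahnSeries.coeff_smul, smul_eq_mul]
      exact (Polynomial.mul_divByMonic_eq_iff_isRoot.mpr (h z)).symm

lemma euler_dvd {l : ℕ} {x : LH} (h : tm l ∣ x) : tm l ∣ euler x := by
  rw [dvd_iff] at *
  intro z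
  simp [euler_coeff, h z]

/-! ### Polynomial families -/

/-- The family is polynomial in `i` for `i ≥ M`. -/
def PolyFam (M : ℕ) (a : ℕ → LH) : Prop :=
  ∃ P : Polynomial LH, ∀ i ≥ M, a i = P.eval (i : LH)

lemma PolyFam.add {M : ℕ} {a b : ℕ → LH} (ha : PolyFam M a) (hb : PolyFam M b) :
    PolyFam M (fun i => a i + b i) := by
  obtain ⟨P, hP⟩ := ha
  obtain ⟨Q, hQ⟩ := hb
  exact ⟨P + Q, fun i hi => by simp [hP i hi, hQ i hi]⟩

lemma PolyFam.sub {M : ℕ} {a b : ℕ → LH} (ha : PolyFam M a) (hb : PolyFam M b) :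
    PolyFam M (fun i => a i - b i) := by
  obtain ⟨P, hP⟩ := ha
  obtain ⟨Q, hQ⟩ := hb
  exact ⟨P - Q, fun i hi => by simp [hP i hi, hQ i hi]⟩

lemma PolyFam.mul {M : ℕ} {a b : ℕ → LH} (ha : PolyFam M a) (hb : PolyFam M b) :
    PolyFam M (fun i => a i * b i) := by
  obtain ⟨P, hP⟩ := ha
  obtain ⟨Q, hQ⟩ := hb
  exact ⟨P * Q, fun i hi => by simp [hP i hi, hQ i hi]⟩

lemma PolyFam.const (M : ℕ) (c : LH) : PolyFam M (fun _ => c) :=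
  ⟨Polynomial.C c, fun i _ => by simp⟩

lemma PolyFam.sum {M : ℕ} {ι : Type*} (s : Finset ι) (a : ι → ℕ → LH)
    (h : ∀ k ∈ s, PolyFam M (a k)) : PolyFam M (fun i => ∑ k ∈ s, a k i) := by
  classical
  induction s using Finset.induction_on with
  | empty => simpa using PolyFam.const M 0
  | insert k s hk ih =>
    simp only [Finset.sum_insert hk]
    exact (h k (by simp)).add (ih fun k' hk' => h k' (by simp [hk']))

lemma PolyFam.shift {M : ℕ} {a : ℕ → LH} (ha : PolyFam M a) (m : ℕ) :
    PolyFam M (fun i => a (i + m)) := by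
  obtain ⟨P, hP⟩ := ha
  refine ⟨P.comp (Polynomial.X + Polynomial.C (m : LH)), fun i hi => ?_⟩
  show a (i + m) = _
  rw [hP (i + m) (by omega)]
  simp

lemma PolyFam.euler {M : ℕ} {a : ℕ → LH} (ha : PolyFam M a) :
    PolyFam M (fun i => euler (a i)) := by
  obtain ⟨P, hP⟩ := ha
  refine ⟨∑ k ∈ Finset.range (P.natDegree + 1),
    Polynomial.C (_root_.euler (P.coeff k)) * Polynomial.X ^ k, fun i hi => ?_⟩
  show _root_.euler (a i) = _
  rw [hP i hi, Polynomial.eval_eq_sum_range, map_sum, Polynomial.eval_finsetSum]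
  apply Finset.sum_congr rfl
  intro k _
  have e : ∀ x : LH, x * (i : LH) ^ k = (i ^ k) • x := fun x => by
    rw [nsmul_eq_mul, mul_comm]; push_cast; rfl
  simp only [Polynomial.eval_mul, Polynomial.eval_C, Polynomial.eval_pow, Polynomial.eval_X]
  rw [e, e, map_nsmul]

lemma faulhaber (p : ℕ) : ∃ Q : Polynomial LH, ∀ n : ℕ,
    ∑ k ∈ Finset.range n, (k : LH) ^ p = Q.eval (n : LH) := by
  let φ : ℚ →+* LH := (HahnSeries.C).comp ((Polynomial.C).comp (algebraMap ℚ ℂ))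
  let Q : Polynomial ℚ := ∑ i ∈ Finset.range (p + 1),
    Polynomial.C (bernoulli i * ((p + 1).choose i) / (p + 1)) * Polynomial.X ^ (p + 1 - i)
  refine ⟨Q.map φ, fun n => ?_⟩
  have h := sum_range_pow n p
  have h2 : Q.eval (n : ℚ) = ∑ k ∈ Finset.range n, (k : ℚ) ^ p := by
    rw [h, Polynomial.eval_finsetSum]
    apply Finset.sum_congr rfl
    intro i _
    simp
    ring
  have h3 : (n : LH) = φ (n : ℚ) := by simp
  rw [h3, Polynomial.eval_map, Polynomial.eval₂_hom, h2]
  simp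

lemma PolyFam.sumRange {M : ℕ} {a : ℕ → LH} (ha : PolyFam M a) :
    PolyFam M (fun i => ∑ r ∈ Finset.range i, a r) := by
  obtain ⟨P, hP⟩ := ha
  choose Q hQ using faulhaber
  have key : ∀ i : ℕ, ∑ r ∈ Finset.range i, P.eval (r : LH) =
      (∑ k ∈ Finset.range (P.natDegree + 1), Polynomial.C (P.coeff k) * Q k).eval (i : LH) := by
    intro i
    simp only [Polynomial.eval_eq_sum_range (p := P)]
    rw [Finset.sum_comm, Polynomial.eval_finsetSum]
    apply Finset.sum_congr rfl
    intro k _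
    rw [← Finset.mul_sum, hQ]
    simp
  refine ⟨(∑ k ∈ Finset.range (P.natDegree + 1), Polynomial.C (P.coeff k) * Q k) +
    Polynomial.C (∑ r ∈ Finset.range M, (a r - P.eval (r : LH))), fun i hi => ?_⟩
  rw [Polynomial.eval_add, ← key, Polynomial.eval_C]
  obtain ⟨d, rfl⟩ := Nat.exists_eq_add_of_le hi
  show ∑ r ∈ Finset.range (M + d), a r = _
  rw [Finset.sum_range_add, Finset.sum_range_add, Finset.sum_sub_distrib]
  have : ∑ x ∈ Finset.range d, a (M + x) = ∑ x ∈ Finset.range d, P.eval ((M + x : ℕ) : LH) :=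
    Finset.sum_congr rfl fun x _ => hP _ (by omega)
  rw [this]
  ring

lemma natpow_mul_coeff (x : LH) (i k : ℕ) (z : ℤ) :
    (x * (i : LH) ^ k).coeff z = ((i : ℂ) ^ k) • x.coeff z := by
  have e : x * (i : LH) ^ k = (i ^ k) • x := by
    rw [nsmul_eq_mul, mul_comm]; push_cast; rfl
  rw [e, HahnSeries.coeff_smul, ← Nat.cast_smul_eq_nsmul ℂ]
  push_cast
  rfl

/-- From a polynomial family to the explicit form. -/
lemma PolyFam.explicit {M : ℕ} {a : ℕ → LH} (ha : PolyFam M a) :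
    ∃ m : ℕ, ∃ c : ℕ → LS, ∀ i ≥ M,
      (a i).coeff = fun z => ∑ k ∈ Finset.range m, ((i : ℂ) ^ k) • c k z := by
  obtain ⟨P, hP⟩ := ha
  refine ⟨P.natDegree + 1, fun k => (P.coeff k).coeff, fun i hi => ?_⟩
  funext z
  rw [hP i hi, Polynomial.eval_eq_sum_range, HahnSeries.coeff_sum]
  exact Finset.sum_congr rfl fun k _ => natpow_mul_coeff _ _ _ _

/-- From the explicit form to a polynomial family. -/
lemma PolyFam.of_explicit {M : ℕ} {a : ℕ → LH} (m : ℕ) (c : ℕ → LS)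
    (h : ∀ i ≥ M, (a i).coeff = fun z => ∑ k ∈ Finset.range m, ((i : ℂ) ^ k) • c k z) :
    PolyFam M a := by
  -- uniform lower bound
  obtain ⟨N, hN⟩ : ∃ N : ℤ, ∀ j ∈ Finset.range (m + 1), N ≤ (a (M + j)).order := by
    refine ⟨(Finset.range (m + 1)).inf' ⟨0, by simp⟩ fun j => (a (M + j)).order, fun j hj => ?_⟩
    exact Finset.inf'_le _ hj
  have hpoly : ∀ z : ℤ, ∀ i : ℕ,
      (∑ k ∈ Finset.range m, Polynomial.C (c k z) * Polynomial.X ^ k).eval (i : Polynomial ℂ) =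
        ∑ k ∈ Finset.range m, ((i : ℂ) ^ k) • c k z := by
    intro z i
    rw [Polynomial.eval_finsetSum]
    apply Finset.sum_congr rfl
    intro k _
    simp only [Polynomial.eval_mul, Polynomial.eval_C, Polynomial.eval_pow, Polynomial.eval_X]
    rw [Polynomial.smul_eq_C_mul, mul_comm]
    simp
  have hzero : ∀ z < N, ∀ k ∈ Finset.range m, c k z = 0 := by
    intro z hz
    have hp0 : (∑ k ∈ Finset.range m, Polynomial.C (c k z) * Polynomial.X ^ k) = 0 := by
      apply Polynomial.eq_zero_of_natDegree_lt_card_of_eval_eq_zero _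
        (f := fun j : Fin (m + 1) => ((M + (j : ℕ) : ℕ) : Polynomial ℂ))
      · intro i j hij
        have := Nat.cast_injective hij
        exact Fin.ext (by omega)
      · intro j
        rw [hpoly, ← congrFun (h (M + j) (by omega)) z]
        apply HahnSeries.coeff_eq_zero_of_lt_order
        exact lt_of_lt_of_le hz (hN j (Finset.mem_range.mpr j.2))
      · rw [Fintype.card_fin]
        apply Nat.lt_succ_of_le
        apply Polynomial.natDegree_sum_le_of_forall_le
        intro k hk
        refine (Polynomial.natDegree_C_mul_X_pow_le _ _).trans ?_
        exact (Finset.mem_range.mp hk).le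
    intro k hk
    have := congrArg (fun q => Polynomial.coeff q k) hp0
    simpa [Polynomial.finsetSum_coeff, Polynomial.coeff_C_mul, Polynomial.coeff_X_pow,
      Finset.mem_range.mp hk] using this
  have hb : ∀ k, ∃ y : LH, k ∈ Finset.range m → y.coeff = c k := by
    intro k
    by_cases hk : k ∈ Finset.range m
    · obtain ⟨y, hy⟩ := exists_LH (a := c k) ⟨N, fun z hz => hzero z hz k hk⟩
      exact ⟨y, fun _ => hy⟩
    · exact ⟨0, fun h => absurd h hk⟩
  choose y hy using hb
  refine ⟨∑ k ∈ Finset.range m, Polynomial.C (y k) * Polynomial.X ^ k, fun i hi => ?_⟩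
  ext1
  funext z
  rw [h i hi, Polynomial.eval_finsetSum, HahnSeries.coeff_sum]
  apply Finset.sum_congr rfl
  intro k hk
  simp only [Polynomial.eval_mul, Polynomial.eval_C, Polynomial.eval_pow, Polynomial.eval_X]
  rw [natpow_mul_coeff, hy k hk]

/-! ### The recursion -/

lemma exists_seq {α : Type*} (a0 : α) (next : ℕ → (ℕ → α) → α) :
    ∃ D : ℕ → α, D 0 = a0 ∧
      ∀ n, ∃ F : ℕ → α, (∀ m ≤ n, F m = D m) ∧ D (n + 1) = next n F := by
  let H : ℕ → ℕ → α := fun n => Nat.rec (fun _ => a0)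
    (fun n F => Function.update F (n + 1) (next n F)) n
  have hs : ∀ n, H (n + 1) = Function.update (H n) (n + 1) (next n (H n)) := fun n => rfl
  have hst : ∀ n m, m ≤ n → H n m = H m m := by
    intro n
    induction n with
    | zero => intro m hm; obtain rfl : m = 0 := by omega
              rfl
    | succ n ih =>
      intro m hm
      rcases Nat.lt_or_ge n m with h | h
      · obtain rfl : m = n + 1 := by omega
        rfl
      · rw [hs, Function.update_of_ne (by omega)]
        exact ih m h
  refine ⟨fun n => H n n, rfl, fun n => ⟨H n, fun m hm => hst n m hm, ?_⟩⟩
  show H (n + 1) (n + 1) = _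
  rw [hs, Function.update_self]

lemma core (M n : ℕ) (R : ℕ → LH) (hR : PolyFam M R)
    (hv : ∀ i ≥ M, ∀ s, 1 ≤ s → s ≤ n → tm (i + s) ∣ R i) :
    ∃ K : LH, PolyFam M (fun i => K - ∑ r ∈ Finset.range i, R (r + 1)) ∧
      ∀ s, 1 ≤ s → s ≤ n + 1 → ∀ i ≥ M, tm (i + s) ∣ K - ∑ r ∈ Finset.range i, R (r + 1) := by
  have hS := (hR.shift 1).sumRange
  obtain ⟨Q, hQ⟩ := id hS
  refine ⟨Q.eval (HahnSeries.C (Polynomial.X - 1)), (PolyFam.const M _).sub hS, ?_⟩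
  intro s hs1
  induction s, hs1 using Nat.le_induction with
  | base =>
    intro _ i hi
    have h1 := hQ i hi
    simp only at h1
    rw [h1]
    have h2 : tm (i + 1) = HahnSeries.C (Polynomial.X - 1) - (i : LH) := by
      have : (i : LH) = HahnSeries.C (Polynomial.C (i : ℂ)) := by simp
      rw [this, ← map_sub, tm]
      congr 1
      push_cast
      rw [map_add, map_one]
      ring
    rw [h2]
    exact Polynomial.sub_dvd_eval_sub _ _ _
  | succ s hs ih =>
    intro hsn i hi
    have h1 := ih (by omega) (i + 1) (by omega)
    have h2 := hv (i + 1) (by omega) s hs (by omega)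
    have e : i + 1 + s = i + (s + 1) := by omega
    rw [e] at h1 h2
    have h3 := dvd_add h1 h2
    rw [Finset.sum_range_succ] at h3
    convert h3 using 1
    ring

/-- The inhomogeneous term of the recursion. -/
def Rn (β : ℕ → ℕ → LH) (F : ℕ → ℕ → LH) (n i : ℕ) : LH :=
  ∑ m ∈ Finset.range (n + 1), F m i * β (i + m) (i + n) - euler (F n i)

lemma exists_D (β : ℕ → ℕ → LH) (M : ℕ) (hβ : ∀ n, PolyFam M fun i => β i (i + n))
    (hv : ∀ i ≥ M, ∀ j l, i < l → l ≤ j → tm l ∣ β i j) :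
    ∃ D : ℕ → ℕ → LH, (∀ i, D 0 i = 1) ∧
      (∀ n i, D (n + 1) i = D (n + 1) (i + 1) + Rn β D n (i + 1)) ∧
      ∀ n, PolyFam M (D n) ∧ ∀ i ≥ M, ∀ s, 1 ≤ s → s ≤ n → tm (i + s) ∣ D n i := by
  have hK : ∀ (n : ℕ) (R : ℕ → LH), ∃ K : LH, PolyFam M R →
      (∀ i ≥ M, ∀ s, 1 ≤ s → s ≤ n → tm (i + s) ∣ R i) →
      PolyFam M (fun i => K - ∑ r ∈ Finset.range i, R (r + 1)) ∧
      ∀ s, 1 ≤ s → s ≤ n + 1 → ∀ i ≥ M, tm (i + s) ∣ K - ∑ r ∈ Finset.range i, R (r + 1) := by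
    intro n R
    by_cases h : PolyFam M R ∧ (∀ i ≥ M, ∀ s, 1 ≤ s → s ≤ n → tm (i + s) ∣ R i)
    · obtain ⟨K, h'⟩ := core M n R h.1 h.2
      exact ⟨K, fun _ _ => h'⟩
    · exact ⟨0, fun h1 h2 => absurd ⟨h1, h2⟩ h⟩
  choose K hK using hK
  obtain ⟨D, hD0, hD⟩ := exists_seq (fun _ : ℕ => (1 : LH))
    (fun n F i => K n (Rn β F n) - ∑ r ∈ Finset.range i, Rn β F n (r + 1))
  have hD' : ∀ n, D (n + 1) =
      fun i => K n (Rn β D n) - ∑ r ∈ Finset.range i, Rn β D n (r + 1) := by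
    intro n
    obtain ⟨F, hF, h⟩ := hD n
    have : Rn β F n = Rn β D n := by
      funext i
      unfold Rn
      rw [hF n le_rfl]
      congr 1
      apply Finset.sum_congr rfl
      intro m hm
      rw [hF m (by have := Finset.mem_range.mp hm; omega)]
    rw [h, this]
  refine ⟨D, fun i => by rw [hD0], fun n i => ?_, fun n => ?_⟩
  · rw [hD']
    simp only [Finset.sum_range_succ]
    ring
  · induction n using Nat.strong_induction_on with
    | _ n ih =>
    rcases n with _ | n
    · rw [hD0]
      exact ⟨PolyFam.const M 1, fun i _ s h1 h2 => by omega⟩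
    · have hR : PolyFam M (Rn β D n) := by
        unfold Rn
        refine PolyFam.sub (PolyFam.sum _ _ fun m hm => ?_) (ih n (by omega)).1.euler
        have hm := Finset.mem_range.mp hm
        refine (ih m (by omega)).1.mul ?_
        have := (hβ (n - m)).shift m
        have e : ∀ i, i + m + (n - m) = i + n := fun i => by omega
        simpa only [e] using this
      have hRv : ∀ i ≥ M, ∀ s, 1 ≤ s → s ≤ n → tm (i + s) ∣ Rn β D n i := by
        intro i hi s h1 h2
        unfold Rn
        refine dvd_sub (Finset.dvd_sum fun m hm => ?_)
          (euler_dvd ((ih n (by omega)).2 i hi s h1 h2))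
        have hm := Finset.mem_range.mp hm
        rcases Nat.lt_or_ge m s with h | h
        · exact Dvd.dvd.mul_left (hv (i + m) (by omega) (i + n) (i + s) (by omega) (by omega)) _
        · exact Dvd.dvd.mul_right ((ih m (by omega)).2 i hi s h1 h) _
      obtain ⟨p1, p2⟩ := hK n _ hR hRv
      rw [hD']
      exact ⟨p1, fun i hi s h1 h2 => p2 s h1 h2 i hi⟩

/-! ### Matrix products -/

lemma matMul_A (X b : ℕ → ℕ → LS) (hb : ∀ i j : ℕ, j < i → b i j = 0) (i j : ℕ) :
    matMul X (fun i' j' => fSh i' j' + b i' j') i j =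
      X i (j + 1) + ∑ k ∈ Finset.range (j + 1), lsMul (X i k) (b k j) := by
  unfold matMul
  rw [finsum_eq_sum_of_support_subset (s := Finset.range (j + 2))]
  · rw [Finset.sum_range_succ, add_comm]
    congr 1
    · simp [fSh, hb (j + 1) j (by omega), lsMul_one_right]
    · apply Finset.sum_congr rfl
      intro k hk
      have hk := Finset.mem_range.mp hk
      simp [fSh, show k ≠ j + 1 by omega]
  · intro k hk
    rw [Function.mem_support] at hk
    simp only [Finset.coe_range, Set.mem_Iio]
    by_contra h
    apply hk
    show lsMul (X i k) (fSh k j + b k j) = 0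
    rw [hb k j (by omega)]
    simp [fSh, show k ≠ j + 1 by omega, lsMul_zero_right]

lemma matMul_B_succ (B X : ℕ → ℕ → LS) (hB : IsFrob B) (i j : ℕ) :
    matMul B X (i + 1) j = X i j := by
  unfold matMul
  rw [finsum_eq_single _ i]
  · rw [hB.2.1, lsMul_one_left]
  · intro k hk
    rw [hB.2.2 (i + 1) k (by omega) (by omega), lsMul_zero_left]

lemma matMul_B_zero (B X : ℕ → ℕ → LS) (hX1 : ∀ i, X i i = lsOne)
    (hX : ∀ i j, j < i → X i j = 0) (j : ℕ) :
    matMul B X 0 j = ∑ k ∈ Finset.range j, lsMul (B 0 k) (X k j) + B 0 j := by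
  unfold matMul
  rw [finsum_eq_sum_of_support_subset (s := Finset.range (j + 1))]
  · rw [Finset.sum_range_succ, hX1, lsMul_one_right]
  · intro k hk
    rw [Function.mem_support] at hk
    simp only [Finset.coe_range, Set.mem_Iio]
    by_contra h
    apply hk
    rw [hX k j (by omega), lsMul_zero_right]

/-! ### Uniqueness -/

/-- The gauge equation. -/
def GaugeEq (b X B : ℕ → ℕ → LS) : Prop :=
  ∀ i j : ℕ, ∀ n : ℤ,
    -(zShift (lsDer (X i j)) n) + matMul X (fun i' j' => fSh i' j' + b i' j') i j n
      = matMul B X i j n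

lemma gauge_unique (b X B X' B' : ℕ → ℕ → LS) (hb : ∀ i j : ℕ, j < i → b i j = 0)
    (hX : IsUnipUT X) (hB : IsFrob B) (h : GaugeEq b X B)
    (hX' : IsUnipUT X') (hB' : IsFrob B') (h' : GaugeEq b X' B') : X = X' ∧ B = B' := by
  obtain ⟨x1, x2, -, -, S, -, -, x3⟩ := hX
  obtain ⟨y1, y2, -, -, S', -, -, y3⟩ := hX'
  have hd : ∀ n i, X i (i + n) = X' i (i + n) := by
    intro n
    induction n using Nat.strong_induction_on with
    | _ n ih =>
    rcases n with _ | n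
    · intro i; simp [x1, y1]
    · have hle : ∀ i k, k ≤ i + n → X i k = X' i k := by
        intro i k hk
        rcases Nat.lt_or_ge k i with hh | hh
        · rw [x2 _ _ hh, y2 _ _ hh]
        · obtain ⟨d, rfl⟩ := Nat.exists_eq_add_of_le hh
          exact ih d (by omega) i
      have hstep : ∀ i, X i (i + (n + 1)) - X' i (i + (n + 1)) =
          X (i + 1) (i + 1 + (n + 1)) - X' (i + 1) (i + 1 + (n + 1)) := by
        intro i
        funext z
        have e1 := h (i + 1) (i + 1 + n) z
        have e2 := h' (i + 1) (i + 1 + n) z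
        rw [matMul_A _ _ hb, matMul_B_succ _ _ hB] at e1
        rw [matMul_A _ _ hb, matMul_B_succ _ _ hB'] at e2
        have es : ∑ k ∈ Finset.range (i + 1 + n + 1), lsMul (X (i + 1) k) (b k (i + 1 + n)) =
            ∑ k ∈ Finset.range (i + 1 + n + 1), lsMul (X' (i + 1) k) (b k (i + 1 + n)) := by
          apply Finset.sum_congr rfl
          intro k hk
          rw [hle (i + 1) k (by have := Finset.mem_range.mp hk; omega)]
        rw [es, hle (i + 1) (i + 1 + n) le_rfl] at e1
        have ee : i + (n + 1) = i + 1 + n := by omega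
        rw [ee]
        simp only [Pi.sub_apply, Pi.add_apply, ← add_assoc] at *
        rw [← e1, ← e2]
        ring
      have hconst : ∀ i, X i (i + (n + 1)) - X' i (i + (n + 1)) =
          X 0 (0 + (n + 1)) - X' 0 (0 + (n + 1)) := by
        intro i
        induction i with
        | zero => rfl
        | succ i ih2 => rw [← hstep, ih2]
      have hzero : X 0 (0 + (n + 1)) - X' 0 (0 + (n + 1)) = 0 := by
        funext z
        apply Polynomial.eq_zero_of_infinite_isRoot
        have hinf : Set.Infinite {i : ℕ | i ∉ S ∪ S'} := by
          exact (Finset.finite_toSet (S ∪ S')).infinite_compl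
        have hinj : Function.Injective (fun i : ℕ => ((i + 1 : ℕ) : ℂ)) := by
          intro i j hij
          have := Nat.cast_injective hij
          omega
        refine (hinf.image hinj.injOn).mono ?_
        rintro _ ⟨i, hi, rfl⟩
        have hi : i ∉ S ∪ S' := hi
        rw [Finset.mem_union, not_or] at hi
        show Polynomial.IsRoot _ _
        rw [← hconst i, Polynomial.IsRoot, Pi.sub_apply, Polynomial.eval_sub,
          x3 i hi.1 (i + 1) (by omega) _ (by omega) (by omega),
          y3 i hi.2 (i + 1) (by omega) _ (by omega) (by omega), sub_zero]
      intro i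
      rw [← sub_eq_zero, hconst, hzero]
  have hXX : X = X' := by
    funext i j
    rcases Nat.lt_or_ge j i with hh | hh
    · rw [x2 _ _ hh, y2 _ _ hh]
    · obtain ⟨d, rfl⟩ := Nat.exists_eq_add_of_le hh
      exact hd d i
  refine ⟨hXX, ?_⟩
  subst hXX
  have h0 : ∀ j, B 0 j = B' 0 j := by
    intro j
    induction j using Nat.strong_induction_on with
    | _ j ih =>
    have e : matMul B X 0 j = matMul B' X 0 j := by
      funext n
      rw [← h 0 j n, ← h' 0 j n]
    rw [matMul_B_zero _ _ x1 x2, matMul_B_zero _ _ x1 x2] at e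
    have es : ∑ k ∈ Finset.range j, lsMul (B 0 k) (X k j) =
        ∑ k ∈ Finset.range j, lsMul (B' 0 k) (X k j) :=
      Finset.sum_congr rfl fun k hk => by rw [ih k (Finset.mem_range.mp hk)]
    rw [es] at e
    exact add_left_cancel e
  funext i j
  rcases i with _ | i
  · exact h0 j
  · by_cases hij : i + 1 = j + 1
    · rw [hij, hB.2.1, hB'.2.1]
    · rw [hB.2.2 _ _ (by omega) hij, hB'.2.2 _ _ (by omega) hij]

/-! ### Existence -/

lemma gauge_exists (b : ℕ → ℕ → LS) (hb : ∀ i j : ℕ, j < i → b i j = 0)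
    (hA : GLmat fun i j => fSh i j + b i j) :
    ∃ X B, IsUnipUT X ∧ IsFrob B ∧ GaugeEq b X B := by
  obtain ⟨a1, -, S, a2, -, a3⟩ := hA
  have hfs : ∀ i j, i ≤ j → fSh i j + b i j = b i j := by
    intro i j hij
    simp [fSh, show i ≠ j + 1 by omega]
  have hbb : ∀ i j, ∃ x : LH, x.coeff = b i j := by
    intro i j
    rcases Nat.lt_or_ge j i with hh | hh
    · exact ⟨0, by rw [hb _ _ hh]; rfl⟩
    · apply exists_LH
      rw [← hfs i j hh]
      exact a1 i j
  choose β hβ using hbb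
  obtain ⟨M, hM⟩ : ∃ M, ∀ i ≥ M, i ∉ S := by
    refine ⟨S.sup id + 1, fun i hi hS => ?_⟩
    have : i ≤ S.sup id := Finset.le_sup (f := id) hS
    omega
  obtain ⟨D, d0, d1, d2⟩ := exists_D β M
    (fun n => by
      obtain ⟨m, c, h⟩ := a2 n
      refine PolyFam.of_explicit m c fun i hi => ?_
      rw [hβ, ← h i (hM i hi)]
      exact (hfs _ _ (by omega)).symm)
    (fun i hi j l h1 h2 => by
      rw [dvd_iff]
      intro z
      rw [hβ, ← hfs _ _ (by omega)]
      exact a3 i (hM i hi) l (by omega) j h1 h2 z)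
  let Xh : ℕ → ℕ → LH := fun i j => if i ≤ j then D (j - i) i else 0
  have X1 : ∀ i n, Xh i (i + n) = D n i := fun i n => by simp [Xh]
  have X2 : ∀ i j, j < i → Xh i j = 0 := fun i j h => by simp [Xh, show ¬ i ≤ j by omega]
  have X0 : ∀ i, Xh i i = 1 := fun i => by simp [Xh, d0]
  let W : ℕ → LH := fun j => -euler (Xh 0 j) + (Xh 0 (j + 1) +
    ∑ k ∈ Finset.range (j + 1), Xh 0 k * β k j)
  obtain ⟨Bh, hB0, hBs⟩ := exists_seq (W 0)
    (fun n F => W (n + 1) - ∑ k ∈ Finset.range (n + 1), F k * Xh k (n + 1))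
  have hBh : ∀ j, W j = ∑ k ∈ Finset.range j, Bh k * Xh k j + Bh j := by
    intro j
    rcases j with _ | j
    · simp [hB0]
    · obtain ⟨F, hF, h⟩ := hBs j
      have : ∑ k ∈ Finset.range (j + 1), F k * Xh k (j + 1) =
          ∑ k ∈ Finset.range (j + 1), Bh k * Xh k (j + 1) :=
        Finset.sum_congr rfl fun k hk => by
          rw [hF k (by have := Finset.mem_range.mp hk; omega)]
      rw [h, this]
      ring
  let X : ℕ → ℕ → LS := fun i j => (Xh i j).coeff
  let B : ℕ → ℕ → LS := fun i j =>
    if i = 0 then (Bh j).coeff else if i = j + 1 then lsOne else 0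
  have hFrob : IsFrob B := by
    refine ⟨fun j => ?_, fun j => ?_, fun i j h1 h2 => ?_⟩
    · simp only [B, if_true]
      exact lsBdd_coeff _
    · simp [B]
    · simp [B, show i ≠ 0 by omega, h2]
  have hX1 : ∀ i, X i i = lsOne := fun i => by simp only [X, X0, lsOne_eq]
  have hX2 : ∀ i j, j < i → X i j = 0 := fun i j h => by simp only [X, X2 i j h]; rfl
  have hsum : ∀ i j, ∑ k ∈ Finset.range (j + 1), lsMul (X i k) (b k j) =
      (∑ k ∈ Finset.range (j + 1), Xh i k * β k j).coeff := by
    intro i j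
    funext z
    rw [HahnSeries.coeff_sum, Finset.sum_apply]
    apply Finset.sum_congr rfl
    intro k _
    rw [← hβ, ← lsMul_coeff]
  have hlhs : ∀ i j n, -(zShift (lsDer (X i j)) n) +
      matMul X (fun i' j' => fSh i' j' + b i' j') i j n =
      (-euler (Xh i j) + (Xh i (j + 1) +
        ∑ k ∈ Finset.range (j + 1), Xh i k * β k j)).coeff n := by
    intro i j n
    rw [matMul_A _ _ hb, hsum, zShift_lsDer, HahnSeries.coeff_add, HahnSeries.coeff_neg,
      euler_coeff, HahnSeries.coeff_add]
    rfl
  refine ⟨X, B, ⟨hX1, hX2, fun i j => lsBdd_coeff _, ⟨0, fun i j h => hX2 i j (by omega)⟩,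
    Finset.range M, fun n => ?_, fun n => ?_, ?_⟩, hFrob, ?_⟩
  · obtain ⟨m, c, h⟩ := (d2 n).1.explicit
    refine ⟨m, c, fun i hi => ?_⟩
    rw [← h i (by simpa using hi)]
    simp only [X, X1]
  · rcases n with _ | n
    · exact ⟨1, fun _ => lsOne, fun i _ => by simp [hX1]⟩
    · refine ⟨0, fun _ => 0, fun i _ => ?_⟩
      rw [hX2 _ _ (by omega)]
      simp
      rfl
  · intro i hi l _ j h1 h2 z
    obtain ⟨s, rfl⟩ := Nat.exists_eq_add_of_lt h1
    obtain ⟨n, rfl⟩ := Nat.exists_eq_add_of_le (show i ≤ j by omega)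
    have := (d2 n).2 i (by simpa using hi) (s + 1) (by omega) (by omega)
    rw [dvd_iff] at this
    simp only [X, X1]
    exact this z
  · intro i j n
    rw [hlhs]
    rcases i with _ | i
    · rw [matMul_B_zero _ _ hX1 hX2]
      have := hBh j
      simp only [W] at this
      rw [this, HahnSeries.coeff_add, HahnSeries.coeff_sum, Pi.add_apply, Finset.sum_apply]
      simp only [B, if_true, X, lsMul_coeff]
    · rw [matMul_B_succ _ _ hFrob]
      show _ = (Xh i j).coeff n
      congr 2
      have hz : ∀ m ≤ i + 1, ∑ k ∈ Finset.range m, Xh (i + 1) k * β k j = 0 := by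
        intro m hm
        apply Finset.sum_eq_zero
        intro k hk
        rw [X2 _ _ (by have := Finset.mem_range.mp hk; omega), zero_mul]
      rcases Nat.lt_trichotomy j i with hh | rfl | hh
      · rw [X2 _ _ hh, X2 (i + 1) j (by omega), X2 (i + 1) (j + 1) (by omega),
          hz _ (by omega)]
        simp
      · rw [X0, X0, X2 _ _ (by omega), hz _ (by omega)]
        simp
      · obtain ⟨m, rfl⟩ := Nat.exists_eq_add_of_lt hh
        have e1 := X1 i (m + 1)
        have e2 := X1 (i + 1) m
        have e3 := X1 (i + 1) (m + 1)
        have t1 : i + m + 1 = i + (m + 1) := by omega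
        have t2 : i + m + 1 = i + 1 + m := by omega
        have t3 : i + m + 1 + 1 = i + 1 + (m + 1) := by omega
        rw [t3, Finset.sum_range_add, e3, hz _ le_rfl, t1, e1, ← t1, t2, e2, d1 m i]
        simp only [X1]
        unfold Rn
        ring

/-- for irrational `g(t)`, every `A = f + b ∈ p_{g(t)}⁻¹(f)` (with `b` upper
triangular, `A` in `gl`) admits a unique pair `(X, B)` with `X ∈ N(z)` and `B` Frobenius
such that `-zX' + XA = BX`. -/
theorem frobenius_canonical_form (g : ℕ → ℂ) (hg : ¬ RationalTail g)
    (b : ℕ → ℕ → LS) (hb : ∀ i j : ℕ, j < i → b i j = 0)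
    (hA : GLmat fun i j => fSh i j + b i j) :
    ∃! P : (ℕ → ℕ → LS) × (ℕ → ℕ → LS),
      IsUnipUT P.1 ∧ IsFrob P.2 ∧
      ∀ i j : ℕ, ∀ n : ℤ,
        -(zShift (lsDer (P.1 i j)) n) + matMul P.1 (fun i' j' => fSh i' j' + b i' j') i j n
          = matMul P.2 P.1 i j n := by
  obtain ⟨X, B, h1, h2, h3⟩ := gauge_exists b hb hA
  refine ⟨(X, B), ⟨h1, h2, h3⟩, ?_⟩
  rintro ⟨X', B'⟩ ⟨h1', h2', h3'⟩
  obtain ⟨e1, e2⟩ := gauge_unique b X' B' X B hb h1' h2' h3' h1 h2 h3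
  rw [Prod.mk.injEq]
  exact ⟨e1, e2⟩
end
end

section
/- For the Gelfand–Dickey Hamiltonian map V_X(L) = (LX)₊L - L(XL)₊ on pseudodifferential symbols: if L is a monic purely differential operator of order n (L = L₊) and X = Q∘D^{-n} with Q a differential operator, then V_X(L) is a differential operator of order at most n-1. Hence the set of monic differential operators of order n is invariant under all such Hamiltonian vector fields. -/
noncomputable section

/-- Generalized binomial coefficient `binom(m, l)` for integer `m`. -/
def qbinom (m : ℤ) (l : ℕ) : ℚ :=
  (∏ i ∈ Finset.range l, ((m : ℚ) - (i : ℚ))) / (Nat.factorial l : ℚ)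

/-- Finite order condition for a symbol `Σ_{k ≤ N} p_k Dᵏ`. -/
def OrderBdd {R : Type*} [Zero R] (A : ℤ → R) : Prop := ∃ N : ℤ, ∀ k : ℤ, N < k → A k = 0

/-- Product of pseudodifferential symbols via `Dᵐ ∘ u = Σ binom(m,l) u^{(l)} D^{m-l}`. -/
def pdMul {R : Type*} [CommRing R] [Algebra ℚ R] (d : R → R) (A B : ℤ → R) : ℤ → R :=
  fun m => ∑ᶠ p : ℤ × ℕ, qbinom p.1 p.2 • (A p.1 * d^[p.2] (B (m - p.1 + (p.2 : ℤ))))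

/-- The differential part `S₊` of a symbol: keep the terms with nonnegative powers of `D`. -/
def pdPlus {R : Type*} [Zero R] (A : ℤ → R) : ℤ → R := fun k => if 0 ≤ k then A k else 0

/-- The symbol `Dᵐ`. -/
def pdPow {R : Type*} [Zero R] [One R] (m : ℤ) : ℤ → R := fun k => if k = m then 1 else 0

open Finset in
theorem aux_qbinom_eq (m : ℤ) (l : ℕ) : qbinom m l = Ring.choose (m : ℚ) l := by
  have h := Ring.descPochhammer_eq_factorial_smul_choose (m : ℚ) l
  have h2 : (descPochhammer ℤ l).smeval (m : ℚ) = ∏ i ∈ range l, ((m : ℚ) - (i : ℚ)) := by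
    rw [← descPochhammer_eval_eq_prod_range, ← Polynomial.aeval_eq_smeval,
      ← descPochhammer_map (algebraMap ℤ ℚ), Polynomial.eval_map_algebraMap]
  have h3 : (l.factorial : ℚ) ≠ 0 := by exact_mod_cast l.factorial_ne_zero
  rw [qbinom, ← h2, h, nsmul_eq_mul]
  field_simp

theorem aux_qbinom_mul (i : ℤ) (r t : ℕ) :
    qbinom i (r + t) * ((r + t).choose r : ℚ) = qbinom i r * qbinom (i - r) t := by
  have h := Ring.choose_smul_choose (i : ℚ) (Nat.le_add_right r t)
  simp only [aux_qbinom_eq]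
  rw [nsmul_eq_mul] at h
  push_cast
  rw [mul_comm, h]
  simp

theorem aux_qbinom_add (i j : ℤ) (s : ℕ) :
    qbinom (i + j) s = ∑ p ∈ Finset.HasAntidiagonal.antidiagonal s, qbinom i p.1 * qbinom j p.2 := by
  simp only [aux_qbinom_eq]
  push_cast
  exact Ring.add_choose_eq s (Commute.all _ _)

theorem aux_qbinom_zero (i : ℤ) (l : ℕ) (h0 : 0 ≤ i) (h : i < l) : qbinom i l = 0 := by
  obtain ⟨m, rfl⟩ := Int.eq_ofNat_of_zero_le h0
  have : m ∈ Finset.range l := by simpa using h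
  rw [qbinom, Finset.prod_eq_zero this (by simp), zero_div]

theorem aux_sum_anti {R : Type*} [AddCommMonoid R] (M : ℕ) (f : ℕ → ℕ → R)
    (hf : ∀ r t, M ≤ r + t → f r t = 0) :
    ∑ m ∈ Finset.range M, ∑ p ∈ Finset.HasAntidiagonal.antidiagonal m, f p.1 p.2
      = ∑ r ∈ Finset.range M, ∑ t ∈ Finset.range M, f r t := by
  rw [Finset.sum_sigma', ← Finset.sum_product']
  refine Finset.sum_bij_ne_zero (fun x _ _ => x.2) ?_ ?_ ?_ ?_
  · rintro ⟨m, r, t⟩ h _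
    simp at h ⊢
    omega
  · rintro ⟨m, r, t⟩ h _ ⟨m', r', t'⟩ h' _ e
    simp at h h' e ⊢
    omega
  · rintro ⟨r, t⟩ h h'
    refine ⟨⟨r + t, r, t⟩, ?_, h', rfl⟩
    simp
    by_contra hc
    exact h' (hf r t (by omega))
  · intros
    rfl

section
variable {R : Type*} [CommRing R] [Algebra ℚ R] (d : Derivation ℚ R R)

theorem aux_iter_eq (m : ℕ) (x : R) : (⇑d)^[m] x = ((d : R →ₗ[ℚ] R) ^ m) x := by
  rw [Module.End.pow_apply]
  rfl

theorem aux_iter_zero (m : ℕ) : (⇑d)^[m] 0 = 0 := by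
  rw [aux_iter_eq, map_zero]

theorem aux_iter_sum {ι : Type*} (m : ℕ) (s : Finset ι) (f : ι → R) :
    (⇑d)^[m] (∑ x ∈ s, f x) = ∑ x ∈ s, (⇑d)^[m] (f x) := by
  simp only [aux_iter_eq, map_sum]

theorem aux_iter_smul (m : ℕ) (q : ℚ) (x : R) :
    (⇑d)^[m] (q • x) = q • (⇑d)^[m] x := by
  simp only [aux_iter_eq, map_smul]

theorem aux_leibniz (m : ℕ) (x y : R) :
    (⇑d)^[m] (x * y) = ∑ p ∈ Finset.HasAntidiagonal.antidiagonal m,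
      (m.choose p.1 : ℚ) • ((⇑d)^[p.1] x * (⇑d)^[p.2] y) := by
  simp only [Nat.cast_smul_eq_nsmul]
  induction m with
  | zero => simp
  | succ m ih =>
    rw [Finset.sum_antidiagonal_choose_succ_nsmul
      (fun i j => (⇑d)^[i] x * (⇑d)^[j] y) m, Function.iterate_succ_apply', ih, map_sum,
      ← Finset.sum_add_distrib]
    refine Finset.sum_congr rfl fun p hp => ?_
    have hp' : p.1 + p.2 = m := by simpa using hp
    have hch : m.choose p.1 = m.choose p.2 := by
      subst hp'
      exact Nat.choose_symm_add
    simp only [map_nsmul, Derivation.leibniz, Function.iterate_succ_apply', smul_eq_mul, ← hch,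
      ← smul_add]
    congr 1
    ring

theorem aux_core (M : ℕ) (i j : ℤ) (a b : R) (c : ℕ → R) (hc : ∀ N, M ≤ N → c N = 0) :
    ∑ m ∈ Finset.range M, qbinom i m • (a * (⇑d)^[m] (∑ l ∈ Finset.range M,
        qbinom j l • (b * (⇑d)^[l] (c (m + l)))))
      = ∑ r ∈ Finset.range M, ∑ s ∈ Finset.range M,
        (qbinom i r * qbinom (i + j - r) s) • (a * (⇑d)^[r] b * (⇑d)^[s] (c (r + s))) := by
  have e1 : ∀ m ∈ Finset.range M, qbinom i m • (a * (⇑d)^[m] (∑ l ∈ Finset.range M,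
        qbinom j l • (b * (⇑d)^[l] (c (m + l)))))
      = ∑ p ∈ Finset.HasAntidiagonal.antidiagonal m, ∑ l ∈ Finset.range M,
        (qbinom i p.1 * (qbinom (i - p.1) p.2 * qbinom j l)) •
          (a * (⇑d)^[p.1] b * (⇑d)^[p.2 + l] (c (p.1 + (p.2 + l)))) := by
    intro m _
    rw [Finset.sum_comm, aux_iter_sum, Finset.mul_sum, Finset.smul_sum]
    refine Finset.sum_congr rfl fun l _ => ?_
    rw [aux_iter_smul, aux_leibniz, Finset.smul_sum, Finset.mul_sum, Finset.smul_sum]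
    refine Finset.sum_congr rfl fun p hp => ?_
    have hp' : p.1 + p.2 = m := by simpa using hp
    subst hp'
    rw [← mul_assoc, ← aux_qbinom_mul, ← Function.iterate_add_apply, add_assoc p.1 p.2 l]
    simp only [mul_smul_comm, smul_smul, mul_assoc]
    congr 1
    ring
  rw [Finset.sum_congr rfl e1, aux_sum_anti M (fun r t => ∑ l ∈ Finset.range M,
        (qbinom i r * (qbinom (i - r) t * qbinom j l)) •
          (a * (⇑d)^[r] b * (⇑d)^[t + l] (c (r + (t + l)))))]
  · refine Finset.sum_congr rfl fun r _ => ?_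
    rw [← aux_sum_anti M (fun t l => 
        (qbinom i r * (qbinom (i - r) t * qbinom j l)) •
          (a * (⇑d)^[r] b * (⇑d)^[t + l] (c (r + (t + l)))))]
    · refine Finset.sum_congr rfl fun s _ => ?_
      rw [show i + j - (r : ℤ) = (i - r) + j by ring, aux_qbinom_add, Finset.mul_sum,
        Finset.sum_smul]
      refine Finset.sum_congr rfl fun p hp => ?_
      have hp' : p.1 + p.2 = s := by simpa using hp
      rw [hp']
    · intro t l h
      rw [hc _ (by omega), aux_iter_zero, mul_zero, smul_zero]
  · intro r t h
    refine Finset.sum_eq_zero fun l _ => ?_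
    rw [hc _ (by omega), aux_iter_zero, mul_zero, smul_zero]

theorem aux_pdMul_eq (A B : ℤ → R) (m : ℤ) (I : Finset ℤ) (M : ℕ)
    (h : ∀ (i : ℤ) (l : ℕ), (i ∉ I ∨ M ≤ l) → A i = 0 ∨ B (m - i + l) = 0) :
    pdMul (⇑d) A B m = ∑ i ∈ I, ∑ l ∈ Finset.range M,
      qbinom i l • (A i * (⇑d)^[l] (B (m - i + l))) := by
  rw [pdMul, ← Finset.sum_product' I (Finset.range M)
    (fun i l => qbinom i l • (A i * (⇑d)^[l] (B (m - i + (l : ℤ)))))]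
  apply finsum_eq_sum_of_support_subset
  rintro ⟨i, l⟩ hp
  by_contra hc
  apply hp
  have : i ∉ I ∨ M ≤ l := by
    simp only [Finset.coe_product, Set.mem_prod, Finset.mem_coe, Finset.mem_range] at hc
    by_cases hi : i ∈ I
    · right
      by_contra hl
      exact hc ⟨hi, by omega⟩
    · exact Or.inl hi
  rcases h i l this with h | h
  · simp [h]
  · simp [h, aux_iter_zero]

theorem aux_pdMul_zero (A B : ℤ → R) (m : ℤ)
    (h : ∀ (i : ℤ) (l : ℕ), qbinom i l = 0 ∨ A i = 0 ∨ B (m - i + l) = 0) :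
    pdMul (⇑d) A B m = 0 := by
  rw [pdMul]
  apply finsum_eq_zero_of_forall_eq_zero
  rintro ⟨i, l⟩
  rcases h i l with h | h | h
  · simp [h]
  · simp [h]
  · simp [h, aux_iter_zero]

theorem aux_pdMul_order (A B : ℤ → R) (a b : ℤ) (hA : ∀ k, a < k → A k = 0)
    (hB : ∀ k, b < k → B k = 0) (m : ℤ) (hm : a + b < m) : pdMul (⇑d) A B m = 0 := by
  apply aux_pdMul_zero
  intro i l
  by_cases hi : a < i
  · exact Or.inr (Or.inl (hA i hi))
  · exact Or.inr (Or.inr (hB _ (by omega)))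

theorem aux_assoc (A B C : ℤ → R) (a b c : ℤ) (hA : ∀ k, a < k → A k = 0)
    (hB : ∀ k, b < k → B k = 0) (hC : ∀ k, c < k → C k = 0) (k : ℤ) :
    pdMul (⇑d) (pdMul (⇑d) A B) C k = pdMul (⇑d) A (pdMul (⇑d) B C) k := by
  have hAB := aux_pdMul_order d A B a b hA hB
  have hBC := aux_pdMul_order d B C b c hB hC
  obtain ⟨M, hM⟩ : ∃ M : ℕ, a + b + c - k < M :=
    ⟨(a + b + c - k).toNat + 1, by omega⟩
  have eR : pdMul (⇑d) A (pdMul (⇑d) B C) k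
      = ∑ i ∈ Finset.Icc (k - b - c) a, ∑ j ∈ Finset.Icc (k - a - c) b,
        ∑ r ∈ Finset.range M, ∑ s ∈ Finset.range M,
        (qbinom i r * qbinom (i + j - r) s) •
          (A i * (⇑d)^[r] (B j) * (⇑d)^[s] (C (k - i - j + (r + s : ℕ)))) := by
    rw [aux_pdMul_eq d A _ k (Finset.Icc (k - b - c) a) M]
    · refine Finset.sum_congr rfl fun i hi => ?_
      rw [Finset.mem_Icc] at hi
      have e1 : ∀ m ∈ Finset.range M,
          qbinom i m • (A i * (⇑d)^[m] (pdMul (⇑d) B C (k - i + m)))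
          = ∑ j ∈ Finset.Icc (k - a - c) b, qbinom i m • (A i * (⇑d)^[m]
            (∑ l ∈ Finset.range M,
              qbinom j l • (B j * (⇑d)^[l] (C (k - i - j + (m + l : ℕ)))))) := by
        intro m _
        rw [aux_pdMul_eq d B C _ (Finset.Icc (k - a - c) b) M, aux_iter_sum, Finset.mul_sum,
          Finset.smul_sum]
        · refine Finset.sum_congr rfl fun j _ => ?_
          congr 3
          refine Finset.sum_congr rfl fun l _ => ?_
          congr 4
          push_cast
          ring
        · intro j l h
          rw [Finset.mem_Icc] at h
          by_cases hj : b < j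
          · exact Or.inl (hB j hj)
          · exact Or.inr (hC _ (by omega))
      rw [Finset.sum_congr rfl e1, Finset.sum_comm]
      refine Finset.sum_congr rfl fun j hj => ?_
      rw [Finset.mem_Icc] at hj
      exact aux_core d M i j (A i) (B j) (fun N => C (k - i - j + (N : ℕ)))
        (fun N hN => hC _ (by omega))
    · intro i l h
      rw [Finset.mem_Icc] at h
      by_cases hi : a < i
      · exact Or.inl (hA i hi)
      · exact Or.inr (hBC _ (by omega))
  have eL : pdMul (⇑d) (pdMul (⇑d) A B) C k
      = ∑ p ∈ Finset.Icc (k - c) (a + b), ∑ i ∈ Finset.Icc (k - b - c) a,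
        ∑ r ∈ Finset.range M, ∑ s ∈ Finset.range M,
        (qbinom i r * qbinom p s) •
          (A i * (⇑d)^[r] (B (p - i + r)) * (⇑d)^[s] (C (k - p + s))) := by
    rw [aux_pdMul_eq d _ C k (Finset.Icc (k - c) (a + b)) M]
    · refine Finset.sum_congr rfl fun p hp => ?_
      rw [Finset.mem_Icc] at hp
      rw [aux_pdMul_eq d A B p (Finset.Icc (k - b - c) a) M]
      · simp only [Finset.sum_mul, Finset.smul_sum]
        rw [Finset.sum_comm]
        refine Finset.sum_congr rfl fun i _ => ?_
        rw [Finset.sum_comm]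
        refine Finset.sum_congr rfl fun r _ => ?_
        refine Finset.sum_congr rfl fun s _ => ?_
        rw [smul_mul_assoc, smul_smul, mul_comm (qbinom p s)]
      · intro i l h
        rw [Finset.mem_Icc] at h
        by_cases hi : a < i
        · exact Or.inl (hA i hi)
        · exact Or.inr (hB _ (by omega))
    · intro i l h
      rw [Finset.mem_Icc] at h
      by_cases hi : a + b < i
      · exact Or.inl (hAB i hi)
      · exact Or.inr (hC _ (by omega))
  rw [eL, eR, Finset.sum_comm]
  refine Finset.sum_congr rfl fun i hi => ?_
  rw [Finset.mem_Icc] at hi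
  rw [Finset.sum_comm, Finset.sum_comm (s := Finset.Icc (k - a - c) b)]
  refine Finset.sum_congr rfl fun r _ => ?_
  rw [Finset.sum_comm, Finset.sum_comm (s := Finset.Icc (k - a - c) b)]
  refine Finset.sum_congr rfl fun s _ => ?_
  refine Finset.sum_bij_ne_zero (fun p _ _ => p - i + r) ?_ ?_ ?_ ?_
  · intro p hp h
    rw [Finset.mem_Icc] at hp ⊢
    refine ⟨by omega, ?_⟩
    by_contra hc
    apply h
    rw [hB _ (by omega), aux_iter_zero, mul_zero, zero_mul, smul_zero]
  · intro p _ _ p' _ _ h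
    omega
  · intro j hj h
    rw [Finset.mem_Icc] at hj
    have e1 : i + j - r - i + r = j := by ring
    have e2 : k - (i + j - r) + s = k - i - j + (r + s : ℕ) := by
      push_cast
      ring
    refine ⟨i + j - r, ?_, ?_, e1⟩
    · rw [Finset.mem_Icc]
      refine ⟨?_, by omega⟩
      by_contra hc
      apply h
      rw [hC _ (by push_cast; omega), aux_iter_zero, mul_zero, smul_zero]
    · rw [e1, e2]
      exact h
  · intro p _ _
    have e1 : i + (p - i + r) - r = p := by ring
    have e2 : k - i - (p - i + r) + (r + s : ℕ) = k - p + s := by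
      push_cast
      ring
    rw [e1, e2]

theorem aux_plus_left (n : ℤ) (P L : ℤ → R) (hL : ∀ k : ℤ, n < k → L k = 0) (k : ℤ)
    (hk : n ≤ k) : pdMul (⇑d) (pdPlus P) L k = pdMul (⇑d) P L k := by
  rw [pdMul, pdMul]
  refine finsum_congr ?_
  rintro ⟨p, l⟩
  by_cases hp : 0 ≤ p
  · simp [pdPlus, hp]
  · simp [hL (k - p + l) (by omega), aux_iter_zero]

theorem aux_plus_right (n : ℤ) (L S : ℤ → R) (hL : ∀ k : ℤ, n < k → L k = 0) (k : ℤ)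
    (hk : n ≤ k) : pdMul (⇑d) L (pdPlus S) k = pdMul (⇑d) L S k := by
  rw [pdMul, pdMul]
  refine finsum_congr ?_
  rintro ⟨i, l⟩
  by_cases hi : n < i
  · simp [hL i hi]
  · have : 0 ≤ k - i + l := by omega
    simp [pdPlus, this]

theorem aux_diff (A B : ℤ → R) (hA : ∀ k : ℤ, k < 0 → A k = 0) (hB : ∀ k : ℤ, k < 0 → B k = 0)
    (k : ℤ) (hk : k < 0) : pdMul (⇑d) A B k = 0 := by
  apply aux_pdMul_zero
  intro i l
  by_cases hi : i < 0
  · exact Or.inr (Or.inl (hA i hi))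
  by_cases hl : i < l
  · exact Or.inl (aux_qbinom_zero i l (by omega) hl)
  · exact Or.inr (Or.inr (hB _ (by omega)))

end

/-- if `L` is a monic differential operator of order `n` and `X = Q ∘ D⁻ⁿ`
with `Q` a differential operator, then the Gelfand–Dickey Hamiltonian vector
`V_X(L) = (LX)₊L − L(XL)₊` is a differential operator of order at most `n-1`; hence the
monic differential operators of order `n` are invariant under these Hamiltonian fields. -/
theorem gd_hamiltonian_preserves_diffops {R : Type*} [CommRing R] [Algebra ℚ R]
    (d : Derivation ℚ R R) (n : ℕ) (L Q : ℤ → R)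
    (hLmonic : L (n : ℤ) = 1) (hLtop : ∀ k : ℤ, (n : ℤ) < k → L k = 0)
    (hLdiff : ∀ k : ℤ, k < 0 → L k = 0)
    (hQdiff : ∀ k : ℤ, k < 0 → Q k = 0) (hQbdd : OrderBdd Q) :
    ∀ k : ℤ, ((n : ℤ) ≤ k ∨ k < 0) →
      (pdMul (⇑d) (pdPlus (pdMul (⇑d) L (pdMul (⇑d) Q (pdPow (-(n : ℤ)))))) L k
        - pdMul (⇑d) L (pdPlus (pdMul (⇑d) (pdMul (⇑d) Q (pdPow (-(n : ℤ)))) L)) k) = 0 := by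
  obtain ⟨N, hN⟩ := hQbdd
  have hplus : ∀ (S : ℤ → R) (k : ℤ), k < 0 → pdPlus S k = 0 := by
    intro S k hk
    simp [pdPlus, not_le.mpr hk]
  rintro k (hk | hk)
  · have hX := aux_pdMul_order d Q (pdPow (-(n : ℤ))) N (-n) hN (by
      intro k hk
      simp [pdPow, hk.ne'])
    rw [aux_plus_left d n _ L hLtop k hk, aux_plus_right d n L _ hLtop k hk,
      aux_assoc d L _ L n _ n hLtop hX hLtop k, sub_self]
  · rw [aux_diff d _ L (hplus _) hLdiff k hk, aux_diff d L _ hLdiff (hplus _) k hk, sub_self]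
end
end
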